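/- arXiv:2102.04290 — 4 statements merged into one kernel-verified Lean document; each statement's English description precedes it below -/
import Mathlib

section
/- Let U ⊆ H be open, let (A∅, φ∅, a∅₃) be a data set on U satisfying the Kapustin–Witten equations (i), (ii), (iii), and let g : U → SL(2,ℂ) be smooth. Define a data set (A, φ, a₃) on U by: (A − A∅)_t − i(a₃ − a∅₃) = −(∇_{A∅t}g)g^{−1} + i[a∅₃, g]g^{−1}; (A − A∅)₁ + i(A − A∅)₂ = −((∇_{A∅1} + i∇_{A∅2})g)g^{−1}; φ = g φ∅ g^{−1}. Then (A, φ, a₃) also satisfies the Kapustin–Witten equations (i), (ii), (iii) at every point of U. -/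
open MeasureTheory Matrix Filter Set
open scoped ENNReal NNReal Topology

noncomputable section

attribute [local instance] Matrix.normedAddCommGroup Matrix.normedSpace

/-- Points of `(0,∞) × ℝ²` live in `ℝ × ℝ × ℝ` with coordinates `(t, z₁, z₂)`. -/
abbrev P3 := ℝ × ℝ × ℝ

/-- 2×2 complex matrices. -/
abbrev M2 := Matrix (Fin 2) (Fin 2) ℂ

/-- The open half-space `H = (0,∞) × ℝ²`. -/
def Hsp : Set P3 := {p | 0 < p.1}

/-- The half-space minus the locus `z = 0`. -/
def Hstar : Set P3 := {p | 0 < p.1 ∧ p.2 ≠ 0}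

/-- The coordinate directions. -/
def et : P3 := (1, 0, 0)
def ez1 : P3 := (0, 1, 0)
def ez2 : P3 := (0, 0, 1)

/-- Commutator of matrices. -/
def mcomm (X Y : M2) : M2 := X * Y - Y * X

/-- `η* = -η†`, minus the conjugate transpose. -/
def mstar (X : M2) : M2 := -Xᴴ

/-- The norm `|M| = ((1/2) trace (M M†))^{1/2}`. -/
noncomputable def mnorm (X : M2) : ℝ := Real.sqrt ((Matrix.trace (X * Xᴴ)).re / 2)

/-- `⟨στ⟩ = -(1/2) trace (στ)`. -/
noncomputable def minner (X Y : M2) : ℂ := -(2:ℂ)⁻¹ * Matrix.trace (X * Y)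

/-- The real inner product of su(2)-valued matrices. -/
noncomputable def ipR (X Y : M2) : ℝ := (minner X Y).re

/-- Membership in su(2): traceless and anti-Hermitian. -/
def IsSU2 (X : M2) : Prop := Matrix.trace X = 0 ∧ Xᴴ = -X

/-- `|z|` for a point of the half-space. -/
noncomputable def znorm (p : P3) : ℝ := Real.sqrt (p.2.1^2 + p.2.2^2)

/-- `z = z₁ + i z₂` as a complex number. -/
noncomputable def zc (p : P3) : ℂ := (p.2.1 : ℂ) + Complex.I * (p.2.2 : ℂ)

/-- Euclidean distance on `ℝ³`. -/
noncomputable def dist3 (p q : P3) : ℝ :=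
  Real.sqrt ((p.1 - q.1)^2 + (p.2.1 - q.2.1)^2 + (p.2.2 - q.2.2)^2)

/-- Directional derivative of a matrix-valued function. -/
noncomputable def pd (v : P3) (f : P3 → M2) (p : P3) : M2 := fderiv ℝ f p v

/-- Directional derivative of a real-valued function. -/
noncomputable def pdR (v : P3) (f : P3 → ℝ) (p : P3) : ℝ := fderiv ℝ f p v

/-- The flat Laplacian `∂_t² + ∂_{z₁}² + ∂_{z₂}²` on real functions. -/
noncomputable def lap3 (f : P3 → ℝ) (p : P3) : ℝ :=
  pdR et (fun q => pdR et f q) p + pdR ez1 (fun q => pdR ez1 f q) p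
    + pdR ez2 (fun q => pdR ez2 f q) p

/-- Covariant derivative `∇_A f = ∂_v f + [A, f]` in direction `v`. -/
noncomputable def cd (A : P3 → M2) (v : P3) (f : P3 → M2) : P3 → M2 :=
  fun p => pd v f p + mcomm (A p) (f p)

/-- `a₁ = (1/2)(φ + φ*)`. -/
noncomputable def a1Of (phi : P3 → M2) (p : P3) : M2 := (2:ℂ)⁻¹ • (phi p + mstar (phi p))

/-- `a₂ = (i/2)(φ - φ*)`. -/
noncomputable def a2Of (phi : P3 → M2) (p : P3) : M2 :=
  (Complex.I * (2:ℂ)⁻¹) • (phi p - mstar (phi p))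

/-- Curvature component `E_{A_1} = ∂_t A₁ - ∂_{z₁} A_t + [A_t, A₁]`. -/
noncomputable def EA1Of (At A1 : P3 → M2) (p : P3) : M2 :=
  pd et A1 p - pd ez1 At p + mcomm (At p) (A1 p)

/-- Curvature component `E_{A_2} = ∂_t A₂ - ∂_{z₂} A_t + [A_t, A₂]`. -/
noncomputable def EA2Of (At A2 : P3 → M2) (p : P3) : M2 :=
  pd et A2 p - pd ez2 At p + mcomm (At p) (A2 p)

/-- Curvature component `B_{A_3} = ∂_{z₁} A₂ - ∂_{z₂} A₁ + [A₁, A₂]`. -/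
noncomputable def B3Of (A1 A2 : P3 → M2) (p : P3) : M2 :=
  pd ez1 A2 p - pd ez2 A1 p + mcomm (A1 p) (A2 p)

/-- `𝔛 = ∇_{A_t} a₃ - B_{A_3} - (i/2)[φ, φ*]`. -/
noncomputable def XOf (At A1 A2 a3 phi : P3 → M2) (p : P3) : M2 :=
  cd At et a3 p - B3Of A1 A2 p - (Complex.I * (2:ℂ)⁻¹) • mcomm (phi p) (mstar (phi p))

/-- The Kapustin-Witten equations (i), (ii), (iii) at a point. -/
def KW123At (At A1 A2 a3 phi : P3 → M2) (p : P3) : Prop :=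
  EA1Of At A1 p = cd A2 ez2 a3 p ∧
  EA2Of At A2 p = -(cd A1 ez1 a3 p) ∧
  cd A1 ez1 phi p + Complex.I • cd A2 ez2 phi p = 0 ∧
  cd At et phi p = Complex.I • mcomm (a3 p) (phi p)

/-- The Kapustin-Witten equation (iv) at a point. -/
def KW4At (At A1 A2 a3 phi : P3 → M2) (p : P3) : Prop :=
  cd At et a3 p = B3Of A1 A2 p + (Complex.I * (2:ℂ)⁻¹) • mcomm (phi p) (mstar (phi p))

/-- The operator `Δ_{(A,a)} u = -(∇²_t + ∇²₁ + ∇²₂) u + Σ_a [a_a, [u, a_a]]`. -/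
noncomputable def lapOf (At A1 A2 a3 phi u : P3 → M2) (p : P3) : M2 :=
  -(cd At et (cd At et u) p + cd A1 ez1 (cd A1 ez1 u) p + cd A2 ez2 (cd A2 ez2 u) p)
  + mcomm (a1Of phi p) (mcomm (u p) (a1Of phi p))
  + mcomm (a2Of phi p) (mcomm (u p) (a2Of phi p))
  + mcomm (a3 p) (mcomm (u p) (a3 p))

/-- An ℝ-invariant data set on an open set `U ⊆ H`: smooth su(2)-valued connection
components `A_t, A₁, A₂`, an su(2)-valued `a₃` and an sl(2,ℂ)-valued `φ`. -/
structure DataSet (U : Set P3) where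
  At : P3 → M2
  A1 : P3 → M2
  A2 : P3 → M2
  a3 : P3 → M2
  phi : P3 → M2
  smooth_At : ContDiffOn ℝ (⊤:ℕ∞) At U
  smooth_A1 : ContDiffOn ℝ (⊤:ℕ∞) A1 U
  smooth_A2 : ContDiffOn ℝ (⊤:ℕ∞) A2 U
  smooth_a3 : ContDiffOn ℝ (⊤:ℕ∞) a3 U
  smooth_phi : ContDiffOn ℝ (⊤:ℕ∞) phi U
  su2_At : ∀ p ∈ U, IsSU2 (At p)
  su2_A1 : ∀ p ∈ U, IsSU2 (A1 p)
  su2_A2 : ∀ p ∈ U, IsSU2 (A2 p)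
  su2_a3 : ∀ p ∈ U, IsSU2 (a3 p)
  sl2_phi : ∀ p ∈ U, Matrix.trace (phi p) = 0

namespace DataSet

variable {U : Set P3} (D : DataSet U)

noncomputable def a1 : P3 → M2 := a1Of D.phi
noncomputable def a2 : P3 → M2 := a2Of D.phi
noncomputable def X : P3 → M2 := XOf D.At D.A1 D.A2 D.a3 D.phi
noncomputable def lap (u : P3 → M2) : P3 → M2 := lapOf D.At D.A1 D.A2 D.a3 D.phi u

end DataSet

/-- The Kapustin-Witten equations (i)-(iii) on `U`. -/
def KW123 (U : Set P3) (D : DataSet U) : Prop :=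
  ∀ p ∈ U, KW123At D.At D.A1 D.A2 D.a3 D.phi p

/-- The Kapustin-Witten equation (iv) on `U`. -/
def KW4 (U : Set P3) (D : DataSet U) : Prop :=
  ∀ p ∈ U, KW4At D.At D.A1 D.A2 D.a3 D.phi p

/-- `|∇_A f|² = Σ_{i ∈ {t,1,2}} |∇_{A_i} f|²`. -/
noncomputable def covGradSqOf (At A1 A2 : P3 → M2) (f : P3 → M2) (p : P3) : ℝ :=
  (mnorm (cd At et f p))^2 + (mnorm (cd A1 ez1 f p))^2 + (mnorm (cd A2 ez2 f p))^2

/-- `|B_{A_3}|² + |E_{A_1}|² + |E_{A_2}|²`. -/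
noncomputable def curvSqOf (At A1 A2 : P3 → M2) (p : P3) : ℝ :=
  (mnorm (B3Of A1 A2 p))^2 + (mnorm (EA1Of At A1 p))^2 + (mnorm (EA2Of At A2 p))^2

/-- `|a| = (|a₁|² + |a₂|² + |a₃|²)^{1/2}`. -/
noncomputable def anormOf (a1 a2 a3 : P3 → M2) (p : P3) : ℝ :=
  Real.sqrt ((mnorm (a1 p))^2 + (mnorm (a2 p))^2 + (mnorm (a3 p))^2)

/-- `σ₁ = i·(first Pauli matrix)` and its siblings: a basis of su(2) with
`σ_a² = -𝕀`, `σ₁σ₂ = -σ₃`, `σ₂σ₃ = -σ₁`, `σ₃σ₁ = -σ₂`. -/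
def s1 : M2 := !![0, Complex.I; Complex.I, 0]
def s2 : M2 := !![0, 1; -1, 0]
def s3 : M2 := !![Complex.I, 0; 0, -Complex.I]

/-- `Θ = arcsinh(t/|z|)`. -/
noncomputable def Th (p : P3) : ℝ := Real.arsinh (p.1 / znorm p)

/-- The function `α_m`. -/
noncomputable def alphaM (m : ℕ) (p : P3) : ℝ :=
  -(1/(2*p.1)) * (((m:ℝ)+1) * Real.sinh (Th p) / Real.sinh (((m:ℝ)+1) * Th p))
    * (Real.cosh (((m:ℝ)+1) * Th p) / Real.cosh (Th p))

/-- The function `f_m`. -/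
noncomputable def fM (m : ℕ) (p : P3) : ℝ :=
  1 - (Real.sinh (Th p) * Real.cosh (((m:ℝ)+1) * Th p))
      / (Real.cosh (Th p) * Real.sinh (((m:ℝ)+1) * Th p))

/-- Model data: `A_t^{(m)} = 0`. -/
noncomputable def modelAt (_m : ℕ) : P3 → M2 := fun _ => 0

/-- Model data: `A₁^{(m)}`. -/
noncomputable def modelA1 (m : ℕ) (p : P3) : M2 :=
  ((-((((m:ℝ)+1))/2) * fM m p * (p.2.2 / (znorm p)^2) : ℝ) : ℂ) • s3

/-- Model data: `A₂^{(m)}`. -/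
noncomputable def modelA2 (m : ℕ) (p : P3) : M2 :=
  ((((((m:ℝ)+1))/2) * fM m p * (p.2.1 / (znorm p)^2) : ℝ) : ℂ) • s3

/-- Model data: `a₃^{(m)} = α_m σ₃`. -/
noncomputable def modela3 (m : ℕ) (p : P3) : M2 := ((alphaM m p : ℝ) : ℂ) • s3

/-- Model data: `φ^{(m)}`. -/
noncomputable def modelPhi (m : ℕ) (p : P3) : M2 :=
  (-(((2*p.1 : ℝ) : ℂ))⁻¹
    * (((((m:ℝ)+1) * Real.sinh (Th p) / Real.sinh (((m:ℝ)+1) * Th p)) : ℝ) : ℂ)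
    * (zc p / ((znorm p : ℝ) : ℂ))^m) • (s1 - Complex.I • s2)

/-- A smooth SU(2)-valued map on `U`. -/
def SU2Map (h : P3 → M2) (U : Set P3) : Prop :=
  ContDiffOn ℝ (⊤:ℕ∞) h U ∧ ∀ p ∈ U, (h p)ᴴ * h p = 1 ∧ (h p).det = 1

/-- Gauge action on a connection component: `A ↦ h A h⁻¹ - (∂_v h) h⁻¹`. -/
noncomputable def gAct (h : P3 → M2) (v : P3) (A : P3 → M2) (p : P3) : M2 :=
  h p * A p * (h p)⁻¹ - pd v h p * (h p)⁻¹

/-- Pointwise norm of the difference between the `h`-gauge transform of a data set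
and the model data set labelled by `m` (summing all six components). -/
noncomputable def gaugeDiff (h : P3 → M2) {U : Set P3} (D : DataSet U) (m : ℕ) (p : P3) : ℝ :=
  mnorm (gAct h et D.At p - modelAt m p) + mnorm (gAct h ez1 D.A1 p - modelA1 m p)
  + mnorm (gAct h ez2 D.A2 p - modelA2 m p)
  + mnorm (h p * D.a1 p * (h p)⁻¹ - a1Of (modelPhi m) p)
  + mnorm (h p * D.a2 p * (h p)⁻¹ - a2Of (modelPhi m) p)
  + mnorm (h p * D.a3 p * (h p)⁻¹ - modela3 m p)

/-- The asymptotic description (1.10) for the pair `(m, np)`:  gauge-asymptotic to the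
model `m + 2np` as `t → 0`, to the model `m` as `t → ∞` (with convergence of
`ln(|φ|/|φ^{(m)}|)`), and to the model `0` as `|z|/t → ∞` (via an `SU(2)/{±1}`-valued
gauge transformation, encoded by local smooth lifts). -/
def Described110 (D : DataSet Hsp) (m np : ℕ) : Prop :=
  ∃ g0 gi : P3 → M2, ∃ dgt : P3 → ℝ,
    SU2Map g0 (Hsp ∩ {q | q.1 < 1}) ∧
    SU2Map gi (Hsp ∩ {q | 1 < q.1}) ∧
    (∀ ε > (0:ℝ), ∃ δ : ℝ, 0 < δ ∧ δ ≤ 1 ∧ ∀ q ∈ Hsp, q.1 < δ →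
        q.1 * gaugeDiff g0 D (m + 2*np) q < ε) ∧
    (∀ ε > (0:ℝ), ∃ K : ℝ, 1 ≤ K ∧ ∀ q ∈ Hsp, K < q.1 →
        q.1 * gaugeDiff gi D m q
          + |Real.log (mnorm (D.phi q) / mnorm (modelPhi m q))| < ε) ∧
    (∀ q ∈ Hsp, q.1 < znorm q →
        ∃ V : Set P3, IsOpen V ∧ q ∈ V ∧ ∃ h : P3 → M2, SU2Map h (V ∩ Hsp) ∧
          ∀ q' ∈ V ∩ Hsp, q'.1 < znorm q' → dgt q' = gaugeDiff h D 0 q') ∧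
    (∀ ε > (0:ℝ), ∃ K : ℝ, 0 < K ∧ ∀ q ∈ Hsp, K * q.1 < znorm q → q.1 * dgt q < ε)

/-- Gauge equivalence of two data sets on `H` by a smooth SU(2)-valued map. -/
def GaugeEquiv (D D' : DataSet Hsp) : Prop :=
  ∃ h : P3 → M2, SU2Map h Hsp ∧ ∀ p ∈ Hsp,
    D'.At p = gAct h et D.At p ∧ D'.A1 p = gAct h ez1 D.A1 p ∧
    D'.A2 p = gAct h ez2 D.A2 p ∧
    D'.phi p = h p * D.phi p * (h p)⁻¹ ∧ D'.a3 p = h p * D.a3 p * (h p)⁻¹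

/-- Condition (1.9). -/
def Obeys19 (D : DataSet Hsp) : Prop :=
  (∃ C : ℝ, ∀ p ∈ Hsp, p.1 * anormOf D.a1 D.a2 D.a3 p ≤ C) ∧
  (∃ t0 > (0:ℝ), ∃ ε > (0:ℝ), ∃ r > (0:ℝ), ∀ p ∈ Hsp,
      p.1 < t0 → r * p.1 ≤ znorm p → ε < p.1 * anormOf D.a1 D.a2 D.a3 p) ∧
  (∃ C > (0:ℝ), ∀ R > (0:ℝ),
      (∫⁻ p in Hsp ∩ {q | R < znorm q}, ENNReal.ofReal (curvSqOf D.At D.A1 D.A2 p))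
        ≤ ENNReal.ofReal (C / R))

/-- `|f| → 0` as `t → 0` and as `t → ∞` (uniformly in `z`) and as `t/|z| → 0`. -/
def UAsymp (f : P3 → M2) : Prop :=
  (∀ ε > (0:ℝ), ∃ δ > (0:ℝ), ∀ p ∈ Hsp, p.1 < δ → mnorm (f p) < ε) ∧
  (∀ ε > (0:ℝ), ∃ K : ℝ, ∀ p ∈ Hsp, K < p.1 → mnorm (f p) < ε) ∧
  (∀ ε > (0:ℝ), ∃ δ > (0:ℝ), ∀ p ∈ Hsp, p.1 < δ * znorm p → mnorm (f p) < ε)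

/-- The parameter domain `[0, T)` of a flow. -/
def flowDom (T : ℝ≥0∞) : Set ℝ := {s : ℝ | 0 ≤ s ∧ ENNReal.ofReal s < T}

/-- A flow for the base data set `D` on `[0, T)`:  a smooth family `s ↦ g|_s` of
`SL(2,ℂ)`-valued maps with `g|₀ ≡ 𝕀` such that `u|_s = -i(∂_s g)g⁻¹` is su(2)-valued,
the associated data sets `Ds s` are obtained from `g|_s` by the complex gauge action,
`Δ_{(A|_s,a|_s)} u|_s = 𝔛|_s`, and `|u|_s|` decays as `t → 0`, `t → ∞`, `t/|z| → 0`. -/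
structure KWFlow (D : DataSet Hsp) (T : ℝ≥0∞) where
  g : ℝ → P3 → M2
  Ds : ℝ → DataSet Hsp
  u : ℝ → P3 → M2
  smooth_g : ContDiffOn ℝ (⊤:ℕ∞) (fun q : ℝ × P3 => g q.1 q.2) (flowDom T ×ˢ Hsp)
  g_zero : ∀ p ∈ Hsp, g 0 p = 1
  det_g : ∀ s ∈ flowDom T, ∀ p ∈ Hsp, (g s p).det = 1
  u_def : ∀ s ∈ flowDom T, ∀ p ∈ Hsp,
    u s p = (-Complex.I) • (deriv (fun s' => g s' p) s * (g s p)⁻¹)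
  su2_u : ∀ s ∈ flowDom T, ∀ p ∈ Hsp, IsSU2 (u s p)
  eq_t : ∀ s ∈ flowDom T, ∀ p ∈ Hsp,
    ((Ds s).At p - D.At p) - Complex.I • ((Ds s).a3 p - D.a3 p)
      = -(cd D.At et (g s) p * (g s p)⁻¹) + Complex.I • (mcomm (D.a3 p) (g s p) * (g s p)⁻¹)
  eq_z : ∀ s ∈ flowDom T, ∀ p ∈ Hsp,
    ((Ds s).A1 p - D.A1 p) + Complex.I • ((Ds s).A2 p - D.A2 p)
      = -((cd D.A1 ez1 (g s) p + Complex.I • cd D.A2 ez2 (g s) p) * (g s p)⁻¹)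
  eq_phi : ∀ s ∈ flowDom T, ∀ p ∈ Hsp, (Ds s).phi p = g s p * D.phi p * (g s p)⁻¹
  lap_eq : ∀ s ∈ flowDom T, ∀ p ∈ Hsp, (Ds s).lap (u s) p = (Ds s).X p
  asymp_u : ∀ s ∈ flowDom T, UAsymp (u s)

/-- `|∇_{A} a|²`, summing over all three covariant derivatives of all of `a₁,a₂,a₃`. -/
noncomputable def covaNormSq {U : Set P3} (D : DataSet U) (p : P3) : ℝ :=
  covGradSqOf D.At D.A1 D.A2 D.a1 p + covGradSqOf D.At D.A1 D.A2 D.a2 p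
    + covGradSqOf D.At D.A1 D.A2 D.a3 p

/-- `|a|² = Σ_a |a_a|²`. -/
noncomputable def anormSq {U : Set P3} (D : DataSet U) (p : P3) : ℝ :=
  (mnorm (D.a1 p))^2 + (mnorm (D.a2 p))^2 + (mnorm (D.a3 p))^2

/-- The function `q ↦ μ_q`: the largest `μ ∈ (0, min(1/t_q, 1/100)]` such that
`μ² t_q² (|B| + |E₁| + |E₂| + |∇_A a| + |a|²) ≤ 1` on the ball of radius `t_q/4`
centered at `q`. -/
noncomputable def mu (D : DataSet Hsp) (q : P3) : ℝ :=
  sSup {μ : ℝ | 0 < μ ∧ μ ≤ min (1/q.1) (1/100) ∧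
    ∀ p, dist3 p q < q.1/4 →
      μ^2 * q.1^2 * (mnorm (B3Of D.A1 D.A2 p) + mnorm (EA1Of D.At D.A1 p)
        + mnorm (EA2Of D.At D.A2 p) + Real.sqrt (covaNormSq D p) + anormSq D p) ≤ 1}

/-- The Dirichlet Green's function of the half-space Laplacian with pole at `q`. -/
noncomputable def Gf (q p : P3) : ℝ :=
  (4*Real.pi)⁻¹ * (Real.sqrt ((p.1 - q.1)^2 + (p.2.1 - q.2.1)^2 + (p.2.2 - q.2.2)^2))⁻¹
  - (4*Real.pi)⁻¹ * (Real.sqrt ((p.1 + q.1)^2 + (p.2.1 - q.2.1)^2 + (p.2.2 - q.2.2)^2))⁻¹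

/-- A family `g : [0,T) → (maps on H)` extends smoothly to the closed interval `[0,T]`;
when `T = ∞` this is in the reparametrized sense `r = 1 - e^{-s}`. -/
def ExtendsToClosed (T : ℝ≥0∞) (g : ℝ → P3 → M2) : Prop :=
  (T ≠ ⊤ → ∃ G : ℝ → P3 → M2,
     ContDiffOn ℝ (⊤:ℕ∞) (fun q : ℝ × P3 => G q.1 q.2) (Set.Icc 0 T.toReal ×ˢ Hsp) ∧
     ∀ s ∈ Set.Ico (0:ℝ) T.toReal, ∀ p ∈ Hsp, G s p = g s p) ∧
  (T = ⊤ → ∃ G : ℝ → P3 → M2,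
     ContDiffOn ℝ (⊤:ℕ∞) (fun q : ℝ × P3 => G q.1 q.2) (Set.Icc (0:ℝ) 1 ×ˢ Hsp) ∧
     ∀ r ∈ Set.Ico (0:ℝ) 1, ∀ p ∈ Hsp, G r p = g (-Real.log (1 - r)) p)

/-- A family `g : [0,∞) → (maps on H)` extends smoothly (in the reparametrized sense
`r = 1 - e^{-s}`) to `s = ∞` with limit `gi`. -/
def ExtendsToLimit (g : ℝ → P3 → M2) (gi : P3 → M2) : Prop :=
  ∃ G : ℝ → P3 → M2,
    ContDiffOn ℝ (⊤:ℕ∞) (fun q : ℝ × P3 => G q.1 q.2) (Set.Icc (0:ℝ) 1 ×ˢ Hsp) ∧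
    (∀ r ∈ Set.Ico (0:ℝ) 1, ∀ p ∈ Hsp, G r p = g (-Real.log (1 - r)) p) ∧
    (∀ p ∈ Hsp, G 1 p = gi p)

/-- `∫_H (1+t²)|𝔛|²` for a data set on `H`. -/
noncomputable def XnormSqInt (D : DataSet Hsp) : ℝ≥0∞ :=
  ∫⁻ p in Hsp, ENNReal.ofReal ((1 + p.1^2) * (mnorm (D.X p))^2)

/-- Convergence in the C^∞ topology on an open set `Ω`: all iterated derivatives
converge uniformly on every compact subset of `Ω`. -/
def CinftyTendsTo (Ω : Set P3) (f : ℕ → P3 → M2) (g : P3 → M2) : Prop :=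
  ∀ K : Set P3, K ⊆ Ω → IsCompact K → ∀ n : ℕ,
    Filter.Tendsto
      (fun k => sSup ((fun p => ‖iteratedFDeriv ℝ n (fun q => f k q - g q) p‖) '' K))
      Filter.atTop (nhds (0:ℝ))

/-- The hypotheses of Proposition 6.1 for a base data set `D` with constants `M, t0`. -/
def Prop61Hyp (D : DataSet Hsp) (M t0 : ℝ) : Prop :=
  KW123 Hsp D ∧
  XnormSqInt D < ⊤ ∧
  (∃ m np : ℕ, 1 ≤ np ∧ Described110 D m np) ∧
  (∃ μ0 > (0:ℝ), ∀ q ∈ Hsp, μ0 ≤ mu D q) ∧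
  0 < M ∧
  (∀ R > (1:ℝ),
    (∫⁻ p in Hsp ∩ {q | R < znorm q},
        ENNReal.ofReal (curvSqOf D.At D.A1 D.A2 p)) ≤ ENNReal.ofReal (M/R) ∧
    (∫⁻ p in Hsp ∩ {q | R < znorm q},
        ENNReal.ofReal ((mnorm (D.X p))^2)) ≤ ENNReal.ofReal (M/R)) ∧
  (0 < t0 ∧ t0 ≤ 1) ∧
  (∃ C : ℝ, ∀ t ∈ Set.Ioc (0:ℝ) t0,
      (∫⁻ z : ℝ × ℝ, ENNReal.ofReal ((mnorm (D.X (t, z)))^2)) ≤ ENNReal.ofReal C) ∧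
  (∀ t ∈ Set.Ioc (0:ℝ) t0, ∀ R > (1:ℝ),
      (∫⁻ z in {z : ℝ × ℝ | R < Real.sqrt (z.1^2 + z.2^2)},
          ENNReal.ofReal ((mnorm (D.X (t, z)))^2)) ≤ ENNReal.ofReal (M/R))


section DirectionalDerivative

variable {f g : P3 → M2} {p : P3}

lemma pd_congr (v : P3) (h : f =ᶠ[𝓝 p] g) : pd v f p = pd v g p := by
  unfold pd
  rw [h.fderiv_eq]

lemma pd_add (v : P3) (hf : DifferentiableAt ℝ f p) (hg : DifferentiableAt ℝ g p) :
    pd v (fun q => f q + g q) p = pd v f p + pd v g p :=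
  congrArg (fun L : P3 →L[ℝ] M2 => L v) (fderiv_fun_add hf hg)

lemma pd_sub (v : P3) (hf : DifferentiableAt ℝ f p) (hg : DifferentiableAt ℝ g p) :
    pd v (fun q => f q - g q) p = pd v f p - pd v g p :=
  congrArg (fun L : P3 →L[ℝ] M2 => L v) (fderiv_fun_sub hf hg)

lemma pd_const_smul (v : P3) (c : ℂ) (hf : DifferentiableAt ℝ f p) :
    pd v (fun q => c • f q) p = c • pd v f p :=
  congrArg (fun L : P3 →L[ℝ] M2 => L v) (fderiv_fun_const_smul hf c)

lemma DifferentiableAt.m2_mul (hf : DifferentiableAt ℝ f p) (hg : DifferentiableAt ℝ g p) :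
    DifferentiableAt ℝ (fun q => f q * g q) p :=
  ((LinearMap.mul ℝ M2).toContinuousBilinearMap.hasFDerivAt_of_bilinear
    hf.hasFDerivAt hg.hasFDerivAt).differentiableAt

lemma pd_mul (v : P3) (hf : DifferentiableAt ℝ f p) (hg : DifferentiableAt ℝ g p) :
    pd v (fun q => f q * g q) p = pd v f p * g p + f p * pd v g p := by
  have h := (LinearMap.mul ℝ M2).toContinuousBilinearMap.fderiv_of_bilinear hf hg
  rw [add_comm]
  exact congrArg (fun L : P3 →L[ℝ] M2 => L v) h

lemma pd_conjTranspose (v : P3) (hf : DifferentiableAt ℝ f p) :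
    pd v (fun q => (f q)ᴴ) p = (pd v f p)ᴴ := by
  have h := (LinearMap.toContinuousLinearMap
    (conjTransposeLinearEquiv (Fin 2) (Fin 2) ℝ ℂ).toLinearMap).hasFDerivAt.comp p hf.hasFDerivAt
  exact congrArg (fun L : P3 →L[ℝ] M2 => L v) h.fderiv

lemma differentiableAt_pd (v : P3) (hg : ContDiffAt ℝ 2 g p) :
    DifferentiableAt ℝ (pd v g) p :=
  ((hg.fderiv_right (m := 1) (by norm_num)).differentiableAt one_ne_zero).clm_apply
    (differentiableAt_const v)

lemma pd_comm (v w : P3) (hg : ContDiffAt ℝ 2 g p) :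
    pd v (pd w g) p = pd w (pd v g) p := by
  have hd := (hg.fderiv_right (m := 1) (by norm_num)).differentiableAt one_ne_zero
  have key (a b : P3) : pd a (pd b g) p = fderiv ℝ (fderiv ℝ g) p a b := by
    have h := congrArg (fun L : P3 →L[ℝ] M2 => L a)
      (fderiv_clm_apply hd (differentiableAt_const b))
    refine h.trans ?_
    simp only [fderiv_fun_const, Pi.zero_apply, ContinuousLinearMap.comp_zero, zero_add]
    rfl
  rw [key, key]
  exact hg.isSymmSndFDerivAt (by simp) v w

/-- The operator `∂_{z₁} + i ∂_{z₂}`. -/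
def dbar (f : P3 → M2) (p : P3) : M2 := pd ez1 f p + Complex.I • pd ez2 f p

lemma dbar_congr (h : f =ᶠ[𝓝 p] g) : dbar f p = dbar g p := by
  simp only [dbar, pd_congr _ h]

lemma dbar_sub (hf : DifferentiableAt ℝ f p) (hg : DifferentiableAt ℝ g p) :
    dbar (fun q => f q - g q) p = dbar f p - dbar g p := by
  simp only [dbar, pd_sub _ hf hg]
  module

lemma dbar_mul (hf : DifferentiableAt ℝ f p) (hg : DifferentiableAt ℝ g p) :
    dbar (fun q => f q * g q) p = dbar f p * g p + f p * dbar g p := by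
  simp only [dbar, pd_mul _ hf hg, add_mul, mul_add, smul_mul_assoc, mul_smul_comm]
  module

lemma differentiableAt_dbar (hg : ContDiffAt ℝ 2 g p) : DifferentiableAt ℝ (dbar g) p :=
  (differentiableAt_pd ez1 hg).add ((differentiableAt_pd ez2 hg).const_smul Complex.I)

lemma pd_dbar (v : P3) (hg : ContDiffAt ℝ 2 g p) : pd v (dbar g) p = dbar (pd v g) p := by
  have h := pd_add v (differentiableAt_pd ez1 hg)
    ((differentiableAt_pd ez2 hg).const_smul Complex.I)
  refine h.trans (congrArg₂ _ (pd_comm v ez1 hg) ?_)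
  exact (pd_const_smul v Complex.I (differentiableAt_pd ez2 hg)).trans
    (congrArg _ (pd_comm v ez2 hg))

end DirectionalDerivative

section GaugeAlgebra

variable {R : Type*} [Ring R] {g N Z N' Z' gt gz : R}

lemma curvature_gauge_mul {gtz Nz Zt Nz' Zt' : R}
    (hN : N' * g = g * N - gt) (hZ : Z' * g = g * Z - gz)
    (hNz : Nz' * g + N' * gz = gz * N + g * Nz - gtz)
    (hZt : Zt' * g + Z' * gt = gt * Z + g * Zt - gtz) :
    (Zt' - Nz' + (N' * Z' - Z' * N')) * g = g * (Zt - Nz + (N * Z - Z * N)) := by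
  linear_combination (norm := noncomm_ring)
    hZt - hNz + N' * hZ + hN * Z - Z' * hN - hZ * N

lemma covariant_gauge_mul {φ φ' φt φt' : R}
    (hN : N' * g = g * N - gt) (hφ : φ' * g = g * φ)
    (hφt : φt' * g + φ' * gt = gt * φ + g * φt) :
    (φt' + (N' * φ' - φ' * N')) * g = g * (φt + (N * φ - φ * N)) := by
  linear_combination (norm := noncomm_ring)
    hφt + N' * hφ + hN * φ - φ' * hN - hφ * N

end GaugeAlgebra

lemma eq_zero_of_add_I_smul_eq_zero {X Y : M2} (hX : Xᴴ = -X) (hY : Yᴴ = -Y)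
    (h : X + Complex.I • Y = 0) : X = 0 ∧ Y = 0 := by
  have h' := congrArg conjTranspose h
  simp only [conjTranspose_add, conjTranspose_smul, hX, hY, conjTranspose_zero,
    Complex.star_def, Complex.conj_I, neg_smul, smul_neg, neg_neg] at h'
  have hX0 : X = 0 := by
    linear_combination (norm := module) (1 / 2 : ℂ) • h - (1 / 2 : ℂ) • h'
  refine ⟨hX0, ?_⟩
  simpa [hX0] using h

lemma conjTranspose_mcomm_of_skew {X Y : M2} (hX : Xᴴ = -X) (hY : Yᴴ = -Y) :
    (mcomm X Y)ᴴ = -mcomm X Y := by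
  simp [mcomm, conjTranspose_mul, hX, hY]

namespace DataSet

variable {U : Set P3} (D : DataSet U) {p : P3}

/-- The complexified connection component `A_t - i a₃`. -/
def connT (q : P3) : M2 := D.At q - Complex.I • D.a3 q

/-- The complexified connection component `A₁ + i A₂`. -/
def connZ (q : P3) : M2 := D.A1 q + Complex.I • D.A2 q

/-- The curvature of the complexified connection. -/
def complexCurv (q : P3) : M2 :=
  pd et D.connZ q - dbar D.connT q + (D.connT q * D.connZ q - D.connZ q * D.connT q)

lemma differentiableAt_of_contDiffOn {f : P3 → M2} (hf : ContDiffOn ℝ (⊤ : ℕ∞) f U)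
    (hU : IsOpen U) (hp : p ∈ U) : DifferentiableAt ℝ f p :=
  (hf.contDiffAt (hU.mem_nhds hp)).differentiableAt (by simp)

lemma pd_skew {f : P3 → M2} (hf : ContDiffOn ℝ (⊤ : ℕ∞) f U) (hsu : ∀ q ∈ U, IsSU2 (f q))
    (hU : IsOpen U) (hp : p ∈ U) (v : P3) : (pd v f p)ᴴ = -pd v f p := by
  have hd := differentiableAt_of_contDiffOn hf hU hp
  have h : (fun q => (f q)ᴴ) =ᶠ[𝓝 p] fun q => (-1 : ℂ) • f q := by
    filter_upwards [hU.mem_nhds hp] with q hq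
    rw [(hsu q hq).2, neg_one_smul]
  rw [← pd_conjTranspose v hd, pd_congr v h, pd_const_smul v _ hd, neg_one_smul]

lemma complexCurv_eq (hU : IsOpen U) (hp : p ∈ U) :
    D.complexCurv p = (EA1Of D.At D.A1 p - cd D.A2 ez2 D.a3 p)
      + Complex.I • (EA2Of D.At D.A2 p + cd D.A1 ez1 D.a3 p) := by
  have hAt := differentiableAt_of_contDiffOn D.smooth_At hU hp
  have hA1 := differentiableAt_of_contDiffOn D.smooth_A1 hU hp
  have hA2 := differentiableAt_of_contDiffOn D.smooth_A2 hU hp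
  have ha3 := differentiableAt_of_contDiffOn D.smooth_a3 hU hp
  have hZ : pd et D.connZ p = pd et D.A1 p + Complex.I • pd et D.A2 p :=
    (pd_add et hA1 (hA2.const_smul Complex.I)).trans
      (congrArg _ (pd_const_smul et Complex.I hA2))
  have hN (v : P3) : pd v D.connT p = pd v D.At p - Complex.I • pd v D.a3 p :=
    (pd_sub v hAt (ha3.const_smul Complex.I)).trans
      (congrArg _ (pd_const_smul v Complex.I ha3))
  simp only [complexCurv, dbar, hZ, hN, connT, connZ, EA1Of, EA2Of, cd, mcomm,
    mul_add, mul_sub, add_mul, sub_mul, smul_mul_assoc, mul_smul_comm, smul_add, smul_sub,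
    smul_smul, Complex.I_mul_I, neg_one_smul]
  module

lemma complexCurv_eq_zero_iff (hU : IsOpen U) (hp : p ∈ U) :
    D.complexCurv p = 0 ↔ EA1Of D.At D.A1 p = cd D.A2 ez2 D.a3 p ∧
      EA2Of D.At D.A2 p = -(cd D.A1 ez1 D.a3 p) := by
  rw [D.complexCurv_eq hU hp, ← sub_eq_zero (a := EA1Of D.At D.A1 p),
    eq_neg_iff_add_eq_zero]
  refine ⟨eq_zero_of_add_I_smul_eq_zero ?_ ?_, fun ⟨h1, h2⟩ => by rw [h1, h2]; simp⟩
  all_goals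
    simp only [EA1Of, EA2Of, cd, conjTranspose_add, conjTranspose_sub,
      pd_skew D.smooth_At D.su2_At hU hp, pd_skew D.smooth_A1 D.su2_A1 hU hp,
      pd_skew D.smooth_A2 D.su2_A2 hU hp, pd_skew D.smooth_a3 D.su2_a3 hU hp,
      conjTranspose_mcomm_of_skew (D.su2_At p hp).2 (D.su2_A1 p hp).2,
      conjTranspose_mcomm_of_skew (D.su2_At p hp).2 (D.su2_A2 p hp).2,
      conjTranspose_mcomm_of_skew (D.su2_A1 p hp).2 (D.su2_a3 p hp).2,
      conjTranspose_mcomm_of_skew (D.su2_A2 p hp).2 (D.su2_a3 p hp).2]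
    abel

/-- Equations (i)-(iii) in terms of the complexified connection. -/
lemma kw123At_iff (hU : IsOpen U) (hp : p ∈ U) :
    KW123At D.At D.A1 D.A2 D.a3 D.phi p ↔ D.complexCurv p = 0 ∧
      dbar D.phi p + (D.connZ p * D.phi p - D.phi p * D.connZ p) = 0 ∧
      pd et D.phi p + (D.connT p * D.phi p - D.phi p * D.connT p) = 0 := by
  have hz : cd D.A1 ez1 D.phi p + Complex.I • cd D.A2 ez2 D.phi p
      = dbar D.phi p + (D.connZ p * D.phi p - D.phi p * D.connZ p) := by
    simp only [cd, mcomm, dbar, connZ, add_mul, mul_add, smul_mul_assoc, mul_smul_comm]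
    module
  have ht : cd D.At et D.phi p - Complex.I • mcomm (D.a3 p) (D.phi p)
      = pd et D.phi p + (D.connT p * D.phi p - D.phi p * D.connT p) := by
    simp only [cd, mcomm, connT, sub_mul, mul_sub, smul_mul_assoc, mul_smul_comm]
    module
  rw [KW123At, D.complexCurv_eq_zero_iff hU hp, ← hz, ← ht, sub_eq_zero, and_assoc]

end DataSet

/-- The observation around (2.21) of the paper: the data set obtained from a solution
of the Kapustin-Witten equations (i)-(iii) by the complex gauge action of a smooth
`SL(2,ℂ)`-valued map again obeys (i)-(iii). -/
theorem statement11 (U : Set P3) (hU : IsOpen U) (hUH : U ⊆ Hsp)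
    (D D' : DataSet U) (g : P3 → M2)
    (hg : ContDiffOn ℝ (⊤:ℕ∞) g U) (hdet : ∀ p ∈ U, (g p).det = 1)
    (hKW : KW123 U D)
    (heqt : ∀ p ∈ U, (D'.At p - D.At p) - Complex.I • (D'.a3 p - D.a3 p)
        = -(cd D.At et g p * (g p)⁻¹) + Complex.I • (mcomm (D.a3 p) (g p) * (g p)⁻¹))
    (heqz : ∀ p ∈ U, (D'.A1 p - D.A1 p) + Complex.I • (D'.A2 p - D.A2 p)
        = -((cd D.A1 ez1 g p + Complex.I • cd D.A2 ez2 g p) * (g p)⁻¹))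
    (heqphi : ∀ p ∈ U, D'.phi p = g p * D.phi p * (g p)⁻¹) :
    KW123 U D' := by
  have hunit (q : P3) (hq : q ∈ U) : IsUnit (g q).det := by simp [hdet q hq]
  have hN (q : P3) (hq : q ∈ U) : D'.connT q * g q = g q * D.connT q - pd et g q := by
    have h := congrArg (· * g q) (heqt q hq)
    simp only [add_mul, neg_mul, smul_mul_assoc, nonsing_inv_mul_cancel_right (g q) _ (hunit q hq),
      sub_mul, cd, mcomm, smul_sub] at h
    simp only [DataSet.connT, sub_mul, mul_sub, smul_mul_assoc, mul_smul_comm]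
    linear_combination (norm := module) h
  have hZ (q : P3) (hq : q ∈ U) : D'.connZ q * g q = g q * D.connZ q - dbar g q := by
    have h := congrArg (· * g q) (heqz q hq)
    simp only [add_mul, neg_mul, smul_mul_assoc, nonsing_inv_mul_cancel_right (g q) _ (hunit q hq),
      sub_mul, cd, mcomm] at h
    simp only [DataSet.connZ, dbar, add_mul, mul_add, smul_mul_assoc, mul_smul_comm]
    linear_combination (norm := module) h
  have hφ (q : P3) (hq : q ∈ U) : D'.phi q * g q = g q * D.phi q := by
    rw [heqphi q hq, nonsing_inv_mul_cancel_right (g q) _ (hunit q hq)]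
  intro p hp
  have hnhds : ∀ᶠ q in 𝓝 p, q ∈ U := hU.mem_nhds hp
  have hg2 : ContDiffAt ℝ 2 g p :=
    (hg.contDiffAt (hU.mem_nhds hp)).of_le (WithTop.coe_le_coe.2 (le_top (a := (2 : ℕ∞))))
  have dg : DifferentiableAt ℝ g p := hg2.differentiableAt two_ne_zero
  have dT (E : DataSet U) : DifferentiableAt ℝ E.connT p :=
    (DataSet.differentiableAt_of_contDiffOn E.smooth_At hU hp).sub
      ((DataSet.differentiableAt_of_contDiffOn E.smooth_a3 hU hp).const_smul Complex.I)
  have dZ (E : DataSet U) : DifferentiableAt ℝ E.connZ p :=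
    (DataSet.differentiableAt_of_contDiffOn E.smooth_A1 hU hp).add
      ((DataSet.differentiableAt_of_contDiffOn E.smooth_A2 hU hp).const_smul Complex.I)
  have dφ (E : DataSet U) : DifferentiableAt ℝ E.phi p :=
    DataSet.differentiableAt_of_contDiffOn E.smooth_phi hU hp
  have hNz := dbar_congr (hnhds.mono hN)
  rw [dbar_mul (dT D') dg, dbar_sub (dg.m2_mul (dT D)) (differentiableAt_pd et hg2),
    dbar_mul dg (dT D)] at hNz
  have hZt := pd_congr et (hnhds.mono hZ)
  rw [pd_mul et (dZ D') dg, pd_sub et (dg.m2_mul (dZ D)) (differentiableAt_dbar hg2),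
    pd_mul et dg (dZ D), pd_dbar et hg2] at hZt
  have hφt := pd_congr et (hnhds.mono hφ)
  rw [pd_mul et (dφ D') dg, pd_mul et dg (dφ D)] at hφt
  have hφz := dbar_congr (hnhds.mono hφ)
  rw [dbar_mul (dφ D') dg, dbar_mul dg (dφ D)] at hφz
  obtain ⟨hF, hz, ht⟩ := (D.kw123At_iff hU hp).1 (hKW p hp)
  have cancel {X Y : M2} (h : X * g p = g p * Y) (hY : Y = 0) : X = 0 := by
    rw [← mul_nonsing_inv_cancel_right (g p) X (hunit p hp), h, hY, mul_zero, zero_mul]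
  exact (D'.kw123At_iff hU hp).2
    ⟨cancel (curvature_gauge_mul (hN p hp) (hZ p hp) hNz hZt) hF,
      cancel (covariant_gauge_mul (hZ p hp) (hφ p hp) hφz) hz,
      cancel (covariant_gauge_mul (hN p hp) (hφ p hp) hφt) ht⟩

end
end

section
/- There exists c₀ > 0 such that for every q = (t_q, z_q) ∈ H, ∫_H (1 + t²)^{−1} G_q(t,z)² dt dz₁ dz₂ ≤ c₀ · min( t_q , (1 + |ln t_q|)/t_q ). -/
open MeasureTheory Matrix Filter Set
open scoped ENNReal NNReal Topology

noncomputable section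

attribute [local instance] Matrix.normedAddCommGroup Matrix.normedSpace

instance isAddHaarMeasure_volume_P3 : (volume : Measure P3).IsAddHaarMeasure :=
  Measure.prod.instIsAddHaarMeasure _ _

/-- The profile `‖x‖⁻² (‖x‖² + 1)⁻¹` is integrable on `ℝ³`. -/
lemma integrable_norm_profile :
    Integrable (fun x : P3 => (‖x‖ ^ 2)⁻¹ * (‖x‖ ^ 2 + 1)⁻¹) := by
  have hdim : Module.finrank ℝ P3 = 3 := by simp [P3]
  refine (integrable_fun_norm_addHaar volume
    (f := fun y : ℝ => (y ^ 2)⁻¹ * (y ^ 2 + 1)⁻¹)).2 ?_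
  rw [hdim]
  refine integrable_inv_one_add_sq.integrableOn.congr_fun (fun y hy => ?_) measurableSet_Ioi
  have hy : (0 : ℝ) < y := hy
  simp only [smul_eq_mul]
  field_simp
  ring

/-- The profile `‖x - q‖⁻² (‖x - q‖² + τ²)⁻¹` has integral over `ℝ³` proportional
to `τ⁻¹`. -/
lemma lintegral_norm_profile (q : P3) {τ : ℝ} (hτ : 0 < τ) :
    ∫⁻ p : P3, ENNReal.ofReal ((‖p - q‖ ^ 2)⁻¹ * (‖p - q‖ ^ 2 + τ ^ 2)⁻¹)
      = ENNReal.ofReal (τ⁻¹ * ∫ x : P3, (‖x‖ ^ 2)⁻¹ * (‖x‖ ^ 2 + 1)⁻¹) := by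
  have hdim : Module.finrank ℝ P3 = 3 := by simp [P3]
  have hscale : (fun x : P3 => (‖x‖ ^ 2)⁻¹ * (‖x‖ ^ 2 + τ ^ 2)⁻¹)
      = fun x => (τ ^ 4)⁻¹ * ((‖τ⁻¹ • x‖ ^ 2)⁻¹ * (‖τ⁻¹ • x‖ ^ 2 + 1)⁻¹) := by
    funext x
    rw [norm_smul, Real.norm_of_nonneg (inv_nonneg.2 hτ.le)]
    rcases eq_or_ne ‖x‖ 0 with hx | hx
    · simp [hx]
    · field_simp
  have hint : Integrable (fun x : P3 => (‖x‖ ^ 2)⁻¹ * (‖x‖ ^ 2 + τ ^ 2)⁻¹) := by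
    rw [hscale]
    exact (integrable_norm_profile.comp_smul (inv_ne_zero hτ.ne')).const_mul _
  rw [lintegral_sub_right_eq_self
      (fun x : P3 => ENNReal.ofReal ((‖x‖ ^ 2)⁻¹ * (‖x‖ ^ 2 + τ ^ 2)⁻¹)) q,
    ← ofReal_integral_eq_lintegral_ofReal hint (ae_of_all _ fun x => by positivity),
    hscale, integral_const_mul, Measure.integral_comp_inv_smul volume
      (fun x : P3 => (‖x‖ ^ 2)⁻¹ * (‖x‖ ^ 2 + 1)⁻¹), hdim, abs_of_pos (by positivity), smul_eq_mul]
  congr 1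
  field_simp

/-- The sup norm on `ℝ × ℝ × ℝ` is at most the Euclidean one. -/
lemma norm_sq_le_sum_sq (p : P3) : ‖p‖ ^ 2 ≤ p.1 ^ 2 + p.2.1 ^ 2 + p.2.2 ^ 2 := by
  have h1 := sq_abs p.1
  have h2 := sq_abs p.2.1
  have h3 := sq_abs p.2.2
  simp only [Prod.norm_def, Real.norm_eq_abs]
  rcases max_choice |p.1| (max |p.2.1| |p.2.2|) with h | h <;> rw [h]
  · nlinarith [sq_nonneg p.2.1, sq_nonneg p.2.2]
  · rcases max_choice |p.2.1| |p.2.2| with h | h <;> rw [h] <;>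
      nlinarith [sq_nonneg p.1, sq_nonneg p.2.1, sq_nonneg p.2.2]

/-- Pointwise bound for the square of the difference of two inverse square roots. -/
lemma sq_inv_sqrt_sub_le {a b : ℝ} (ha : 0 < a) (hab : a ≤ b) :
    ((√a)⁻¹ - (√b)⁻¹) ^ 2 ≤ (b - a) ^ 2 / (a * b ^ 2) := by
  have hb : 0 < b := ha.trans_le hab
  have hx : 0 < √a := Real.sqrt_pos.2 ha
  have hy : 0 < √b := Real.sqrt_pos.2 hb
  have hxy : √a ≤ √b := Real.sqrt_le_sqrt hab
  have hle : (√a)⁻¹ - (√b)⁻¹ ≤ (b - a) / (√a * b) := by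
    have heq : (√a)⁻¹ - (√b)⁻¹ = (√b - √a) * √b / (√a * b) := by
      rw [← Real.sq_sqrt hb.le, Real.sqrt_sq hy.le]
      field_simp
    rw [heq]
    gcongr
    nlinarith [Real.sq_sqrt ha.le, Real.sq_sqrt hb.le]
  calc ((√a)⁻¹ - (√b)⁻¹) ^ 2 ≤ ((b - a) / (√a * b)) ^ 2 :=
        pow_le_pow_left₀ (sub_nonneg.2 (inv_anti₀ hx hxy)) hle 2
    _ = (b - a) ^ 2 / (a * b ^ 2) := by rw [div_pow, mul_pow, Real.sq_sqrt ha.le]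

/-- Pointwise bound for the weighted square of the Green's function. -/
lemma weighted_Gf_sq_le {q p : P3} (hq : 0 < q.1) (hp : 0 < p.1) (hpq : p ≠ q) :
    (1 + p.1 ^ 2)⁻¹ * Gf q p ^ 2
      ≤ 2 * min 1 (q.1 ^ 2) * ((‖p - q‖ ^ 2)⁻¹ * (‖p - q‖ ^ 2 + q.1 ^ 2)⁻¹) := by
  set a : ℝ := (p.1 - q.1)^2 + (p.2.1 - q.2.1)^2 + (p.2.2 - q.2.2)^2 with ha
  set b : ℝ := (p.1 + q.1)^2 + (p.2.1 - q.2.1)^2 + (p.2.2 - q.2.2)^2 with hb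
  have hn : 0 < ‖p - q‖ ^ 2 := pow_pos (norm_pos_iff.2 (sub_ne_zero.2 hpq)) 2
  have hna : ‖p - q‖ ^ 2 ≤ a := norm_sq_le_sum_sq (p - q)
  have ha0 : 0 < a := hn.trans_le hna
  have hpq0 : 0 < p.1 * q.1 := mul_pos hp hq
  have hba : b - a = 4 * (p.1 * q.1) := by rw [ha, hb]; ring
  have hab : a ≤ b := by linarith
  have hb0 : 0 < b := ha0.trans_le hab
  have hqb : q.1 ^ 2 ≤ b := by
    nlinarith [sq_nonneg p.1, sq_nonneg (p.2.1 - q.2.1), sq_nonneg (p.2.2 - q.2.2)]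
  have hpb : p.1 ^ 2 ≤ b := by
    nlinarith [sq_nonneg q.1, sq_nonneg (p.2.1 - q.2.1), sq_nonneg (p.2.2 - q.2.2)]
  have hG : Gf q p ^ 2 ≤ (p.1 * q.1) ^ 2 / (a * b ^ 2) := by
    have hpi : (4 * Real.pi)⁻¹ ^ 2 * 4 ^ 2 ≤ 1 := by
      rw [← mul_pow]
      refine pow_le_one₀ (by positivity) ?_
      rw [inv_mul_le_iff₀ (by positivity)]
      linarith [Real.pi_gt_three]
    calc Gf q p ^ 2 = (4 * Real.pi)⁻¹ ^ 2 * ((√a)⁻¹ - (√b)⁻¹) ^ 2 := by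
          rw [← mul_pow, mul_sub]; rfl
      _ ≤ (4 * Real.pi)⁻¹ ^ 2 * ((b - a) ^ 2 / (a * b ^ 2)) := by
          gcongr; exact sq_inv_sqrt_sub_le ha0 hab
      _ = ((4 * Real.pi)⁻¹ ^ 2 * 4 ^ 2) * ((p.1 * q.1) ^ 2 / (a * b ^ 2)) := by
          rw [hba]; ring
      _ ≤ (p.1 * q.1) ^ 2 / (a * b ^ 2) := mul_le_of_le_one_left (by positivity) hpi
  have hweight : (1 + p.1 ^ 2)⁻¹ * (p.1 * q.1) ^ 2 / b ≤ min 1 (q.1 ^ 2) := by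
    rw [div_le_iff₀ hb0, inv_mul_le_iff₀ (by positivity), mul_pow]
    rcases min_choice 1 (q.1 ^ 2) with h | h <;> rw [h]
    · nlinarith [mul_le_mul_of_nonneg_left hqb (sq_nonneg p.1)]
    · nlinarith [mul_le_mul_of_nonneg_left hpb (sq_nonneg q.1),
        mul_nonneg (mul_nonneg (sq_nonneg p.1) (sq_nonneg q.1)) hb0.le]
  have hinv : (a * b)⁻¹ ≤ 2 * ((‖p - q‖ ^ 2)⁻¹ * (‖p - q‖ ^ 2 + q.1 ^ 2)⁻¹) := by
    have h2 : b⁻¹ ≤ 2 * (‖p - q‖ ^ 2 + q.1 ^ 2)⁻¹ := by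
      rw [← div_eq_mul_inv, le_div_iff₀ (by positivity), inv_mul_le_iff₀ hb0]
      linarith
    calc (a * b)⁻¹ = a⁻¹ * b⁻¹ := mul_inv _ _
      _ ≤ (‖p - q‖ ^ 2)⁻¹ * (2 * (‖p - q‖ ^ 2 + q.1 ^ 2)⁻¹) := by gcongr
      _ = _ := by ring
  calc (1 + p.1 ^ 2)⁻¹ * Gf q p ^ 2
      ≤ (1 + p.1 ^ 2)⁻¹ * ((p.1 * q.1) ^ 2 / (a * b ^ 2)) := by gcongr
    _ = ((1 + p.1 ^ 2)⁻¹ * (p.1 * q.1) ^ 2 / b) * (a * b)⁻¹ := by field_simp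
    _ ≤ min 1 (q.1 ^ 2) * (2 * ((‖p - q‖ ^ 2)⁻¹ * (‖p - q‖ ^ 2 + q.1 ^ 2)⁻¹)) := by
        gcongr
    _ = _ := by ring

/-- The Green's function integral estimate (4.11) of the paper. -/
theorem statement15 :
    ∃ c0 : ℝ, 0 < c0 ∧ ∀ q ∈ Hsp,
      (∫⁻ p in Hsp, ENNReal.ofReal ((1 + p.1^2)⁻¹ * (Gf q p)^2))
        ≤ ENNReal.ofReal (c0 * min q.1 ((1 + |Real.log q.1|) / q.1)) := by
  set K : ℝ := ∫ x : P3, (‖x‖ ^ 2)⁻¹ * (‖x‖ ^ 2 + 1)⁻¹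
  have hK0 : 0 ≤ K := integral_nonneg fun x => by positivity
  refine ⟨2 * K + 1, by positivity, fun q hq => ?_⟩
  have hq : 0 < q.1 := hq
  have hne : ∀ᵐ p : P3, p ≠ q := by simp [ae_iff]
  calc ∫⁻ p in Hsp, ENNReal.ofReal ((1 + p.1^2)⁻¹ * (Gf q p)^2)
      ≤ ∫⁻ p in Hsp, ENNReal.ofReal (2 * min 1 (q.1 ^ 2))
          * ENNReal.ofReal ((‖p - q‖ ^ 2)⁻¹ * (‖p - q‖ ^ 2 + q.1 ^ 2)⁻¹) := by
        refine lintegral_mono_ae ?_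
        have hH : MeasurableSet Hsp := measurableSet_lt measurable_const measurable_fst
        filter_upwards [ae_restrict_of_ae hne, ae_restrict_mem hH] with p hpq hp
        rw [← ENNReal.ofReal_mul (by positivity)]
        exact ENNReal.ofReal_le_ofReal (weighted_Gf_sq_le hq hp hpq)
    _ ≤ ∫⁻ p, ENNReal.ofReal (2 * min 1 (q.1 ^ 2))
          * ENNReal.ofReal ((‖p - q‖ ^ 2)⁻¹ * (‖p - q‖ ^ 2 + q.1 ^ 2)⁻¹) :=
        setLIntegral_le_lintegral _ _
    _ = ENNReal.ofReal (2 * min 1 (q.1 ^ 2) * (q.1⁻¹ * K)) := by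
        rw [lintegral_const_mul' _ _ ENNReal.ofReal_ne_top, lintegral_norm_profile q hq,
          ← ENNReal.ofReal_mul (by positivity)]
    _ ≤ _ := by
        refine ENNReal.ofReal_le_ofReal ?_
        have h1 : min 1 (q.1 ^ 2) * q.1⁻¹ ≤ min q.1 ((1 + |Real.log q.1|) / q.1) := by
          refine le_min ?_ ?_
          · calc min 1 (q.1 ^ 2) * q.1⁻¹ ≤ q.1 ^ 2 * q.1⁻¹ := by gcongr; exact min_le_right _ _
              _ = q.1 := by field_simp
          · rw [div_eq_mul_inv]
            gcongr
            exact (min_le_left _ _).trans (le_add_of_nonneg_right (abs_nonneg _))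
        have h0 : 0 ≤ min 1 (q.1 ^ 2) * q.1⁻¹ := by positivity
        nlinarith [mul_le_mul_of_nonneg_left h1 hK0]

end
end

section
/- Let λ be a real number with λ ≠ 1 and let f : (0,∞) → ℝ be smooth with compact support contained in (0,∞). Then ∫₀^∞ f(t)² t^{λ−2} dt ≤ (4/(λ−1)²) ∫₀^∞ f'(t)² t^{λ} dt. -/
open MeasureTheory Matrix Filter Set
open scoped ENNReal NNReal Topology

noncomputable section

attribute [local instance] Matrix.normedAddCommGroup Matrix.normedSpace

/-- A `C^n` function supported in `(0,∞)` remains `C^n` after multiplication by a power of `t`. -/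
lemma ContDiff.mul_rpow_of_tsupport_subset_Ioi {n : WithTop ℕ∞} {g : ℝ → ℝ}
    (hg : ContDiff ℝ n g) (hsupp : tsupport g ⊆ Ioi 0) (a : ℝ) :
    ContDiff ℝ n (fun t => g t * t ^ a) :=
  contDiff_iff_contDiffAt.2 fun x => by
    by_cases hx : x ∈ tsupport g
    · exact hg.contDiffAt.mul (Real.contDiffAt_rpow_const_of_ne (ne_of_gt (hsupp hx)))
    · refine (contDiffAt_const (c := (0 : ℝ))).congr_of_eventuallyEq ?_
      filter_upwards [notMem_tsupport_iff_eventuallyEq.1 hx] with t ht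
      simp [ht]

/-- A continuous, compactly supported function with support in `(0,∞)` is integrable there
against every power of `t`. -/
lemma Continuous.integrableOn_mul_rpow_of_tsupport_subset_Ioi {g : ℝ → ℝ}
    (hg : Continuous g) (hc : HasCompactSupport g) (hsupp : tsupport g ⊆ Ioi 0) (a : ℝ) :
    IntegrableOn (fun t => g t * t ^ a) (Ioi 0) :=
  ((contDiff_zero.2 hg).mul_rpow_of_tsupport_subset_Ioi hsupp
    a).continuous.integrable_of_hasCompactSupport hc.mul_right |>.integrableOn

/-- The pointwise inequality behind the weighted Hardy inequality, obtained by completing the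
square in `x + (2 / (lam - 1)) * t * y`. -/
lemma sq_mul_rpow_le_of_pos {lam t : ℝ} (hlam : lam ≠ 1) (ht : 0 < t) (x y : ℝ) :
    x ^ 2 * t ^ (lam - 2) ≤ 4 / (lam - 1) ^ 2 * (y ^ 2 * t ^ lam)
      + 2 / (lam - 1) * (2 * x * y * t ^ (lam - 1) + x ^ 2 * ((lam - 1) * t ^ (lam - 2))) := by
  have hlam' : lam - 1 ≠ 0 := sub_ne_zero.2 hlam
  have h1 : t ^ (lam - 1) = t ^ (lam - 2) * t := by
    rw [← Real.rpow_add_one ht.ne']; ring_nf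
  have h0 : t ^ lam = t ^ (lam - 2) * t ^ 2 := by
    rw [← Real.rpow_add_natCast ht.ne']; norm_num
  rw [h1, h0, ← sub_nonneg]
  have hw := mul_nonneg (Real.rpow_pos_of_pos ht (lam - 2)).le
    (sq_nonneg (x + 2 / (lam - 1) * t * y))
  refine hw.trans_eq ?_
  field_simp
  ring

/-- The one-dimensional weighted Hardy inequality (A.3) of the paper. -/
theorem statement17 (lam : ℝ) (hlam : lam ≠ 1) (f : ℝ → ℝ) (hf : ContDiff ℝ (⊤:ℕ∞) f)
    (hc : HasCompactSupport f) (hsupp : tsupport f ⊆ Set.Ioi (0:ℝ)) :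
    (∫ t in Set.Ioi (0:ℝ), (f t)^2 * t ^ (lam - 2))
      ≤ (4 / (lam - 1)^2) * ∫ t in Set.Ioi (0:ℝ), (deriv f t)^2 * t ^ lam := by
  have hsq : tsupport (fun t => (f t) ^ 2) ⊆ tsupport f :=
    closure_mono fun t ht => by simpa using ht
  have hsq' : tsupport (fun t => (deriv f t) ^ 2) ⊆ tsupport f :=
    (closure_mono fun t ht => by simpa using ht).trans tsupport_deriv_subset
  have hcsq : HasCompactSupport (fun t => (f t) ^ 2) := hc.comp_left (g := (· ^ 2)) (by simp)
  have hcsq' : HasCompactSupport (fun t => (deriv f t) ^ 2) :=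
    hc.deriv.comp_left (g := (· ^ 2)) (by simp)
  have hg : ContDiff ℝ 1 (fun t => (f t) ^ 2 * t ^ (lam - 1)) :=
    ((hf.of_le (by simp)).pow 2).mul_rpow_of_tsupport_subset_Ioi (hsq.trans hsupp) _
  have hgc : HasCompactSupport (fun t => (f t) ^ 2 * t ^ (lam - 1)) := hcsq.mul_right
  have hf0 : f 0 = 0 := image_eq_zero_of_notMem_tsupport fun h => lt_irrefl (0 : ℝ) (hsupp h)
  have hderiv : ∀ t ∈ Ioi (0 : ℝ), deriv (fun t => (f t) ^ 2 * t ^ (lam - 1)) t =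
      2 * f t * deriv f t * t ^ (lam - 1) + (f t) ^ 2 * ((lam - 1) * t ^ (lam - 2)) := by
    intro t ht
    have hft : HasDerivAt f (deriv f t) t := (hf.differentiable (by simp) t).hasDerivAt
    have hmul := (hft.pow 2).mul (Real.hasDerivAt_rpow_const (p := lam - 1) (Or.inl (ne_of_gt ht)))
    refine hmul.deriv.trans ?_
    rw [show lam - 1 - 1 = lam - 2 by ring]
    simp
  have hint : ∫ t in Ioi (0 : ℝ), deriv (fun t => (f t) ^ 2 * t ^ (lam - 1)) t = 0 := by
    rw [hgc.integral_Ioi_deriv_eq hg 0]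
    simp [hf0]
  have hI : IntegrableOn (fun t => (f t) ^ 2 * t ^ (lam - 2)) (Ioi 0) :=
    (hf.continuous.pow 2).integrableOn_mul_rpow_of_tsupport_subset_Ioi hcsq
      (hsq.trans hsupp) (lam - 2)
  have hI' : IntegrableOn (fun t => (deriv f t) ^ 2 * t ^ lam) (Ioi 0) :=
    ((hf.continuous_deriv (by simp)).pow 2).integrableOn_mul_rpow_of_tsupport_subset_Ioi
      hcsq' (hsq'.trans hsupp) lam
  have hIg : IntegrableOn (deriv fun t => (f t) ^ 2 * t ^ (lam - 1)) (Ioi 0) :=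
    ((hg.continuous_deriv le_rfl).integrable_of_hasCompactSupport hgc.deriv).integrableOn
  calc ∫ t in Ioi (0 : ℝ), (f t) ^ 2 * t ^ (lam - 2)
      ≤ ∫ t in Ioi (0 : ℝ), (4 / (lam - 1) ^ 2 * ((deriv f t) ^ 2 * t ^ lam)
          + 2 / (lam - 1) * deriv (fun t => (f t) ^ 2 * t ^ (lam - 1)) t) := by
        refine setIntegral_mono_on hI ((hI'.const_mul _).add (hIg.const_mul _))
          measurableSet_Ioi fun t ht => ?_
        rw [hderiv t ht]
        exact sq_mul_rpow_le_of_pos hlam ht _ _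
    _ = 4 / (lam - 1) ^ 2 * ∫ t in Ioi (0 : ℝ), (deriv f t) ^ 2 * t ^ lam := by
        rw [integral_add (hI'.const_mul _) (hIg.const_mul _), integral_const_mul,
          integral_const_mul, hint, mul_zero, add_zero]

end
end

section
/- For every integer m ≥ 0, the model data set (A^{(m)}, φ^{(m)}, a₃^{(m)}) satisfies all four ℝ-invariant Kapustin–Witten equations (i)–(iv) at every point of {(t,z) ∈ H : z ≠ 0}. -/
open MeasureTheory Matrix Filter Set
open scoped ENNReal NNReal Topology

noncomputable section

attribute [local instance] Matrix.normedAddCommGroup Matrix.normedSpace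

namespace KWModel

/-- The coordinate differential `dt`. -/
def dt : P3 →L[ℝ] ℝ := ContinuousLinearMap.fst ℝ ℝ (ℝ × ℝ)

/-- The coordinate differential `dz₁`. -/
def dz1 : P3 →L[ℝ] ℝ :=
  (ContinuousLinearMap.fst ℝ ℝ ℝ).comp (ContinuousLinearMap.snd ℝ ℝ (ℝ × ℝ))

/-- The coordinate differential `dz₂`. -/
def dz2 : P3 →L[ℝ] ℝ :=
  (ContinuousLinearMap.snd ℝ ℝ ℝ).comp (ContinuousLinearMap.snd ℝ ℝ (ℝ × ℝ))

@[simp] lemma dt_apply (v : P3) : dt v = v.1 := rfl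
@[simp] lemma dz1_apply (v : P3) : dz1 v = v.2.1 := rfl
@[simp] lemma dz2_apply (v : P3) : dz2 v = v.2.2 := rfl

lemma hasFDerivAt_t (p : P3) : HasFDerivAt (fun q : P3 => q.1) dt p := dt.hasFDerivAt
lemma hasFDerivAt_z1 (p : P3) : HasFDerivAt (fun q : P3 => q.2.1) dz1 p := dz1.hasFDerivAt
lemma hasFDerivAt_z2 (p : P3) : HasFDerivAt (fun q : P3 => q.2.2) dz2 p := dz2.hasFDerivAt

/-- The distance `(t² + |z|²)^{1/2}` to the origin. -/
def rad (p : P3) : ℝ := Real.sqrt (p.1 ^ 2 + znorm p ^ 2)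

/-- The hyperbolic cotangent `coth ((m+1) Θ)`. -/
def cothTh (m : ℕ) (p : P3) : ℝ :=
  Real.cosh (((m : ℝ) + 1) * Th p) / Real.sinh (((m : ℝ) + 1) * Th p)

lemma znorm_sq (p : P3) : znorm p ^ 2 = p.2.1 ^ 2 + p.2.2 ^ 2 :=
  Real.sq_sqrt (by positivity)

lemma rad_sq (p : P3) : rad p ^ 2 = p.1 ^ 2 + znorm p ^ 2 :=
  Real.sq_sqrt (by positivity)

lemma znorm_pos {p : P3} (hp : p ∈ Hstar) : 0 < znorm p := by
  refine Real.sqrt_pos.2 ?_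
  have h : p.2.1 ≠ 0 ∨ p.2.2 ≠ 0 := by
    by_contra! h
    exact hp.2 (Prod.ext h.1 h.2)
  rcases h with h | h <;> positivity

lemma rad_pos {p : P3} (hp : p ∈ Hstar) : 0 < rad p := by
  have := znorm_pos hp
  exact Real.sqrt_pos.2 (by positivity)

lemma sinh_Th_pos {p : P3} (m : ℕ) (hp : p ∈ Hstar) :
    0 < Real.sinh (((m : ℝ) + 1) * Th p) := by
  have h : 0 < Th p := Real.arsinh_pos_iff.2 (div_pos hp.1 (znorm_pos hp))
  exact Real.sinh_pos_iff.2 (by positivity)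

lemma sinh_Th (p : P3) : Real.sinh (Th p) = p.1 / znorm p := Real.sinh_arsinh _

lemma cosh_Th {p : P3} (hp : p ∈ Hstar) : Real.cosh (Th p) = rad p / znorm p := by
  have hr := znorm_pos hp
  have hT := rad_pos hp
  rw [← sq_eq_sq₀ (Real.cosh_pos _).le (by positivity), Real.cosh_sq, sinh_Th, div_pow, div_pow,
    rad_sq]
  field_simp

lemma Hstar_mem_nhds {p : P3} (hp : p ∈ Hstar) : Hstar ∈ 𝓝 p := by
  refine IsOpen.mem_nhds ?_ hp
  exact (isOpen_lt continuous_const continuous_fst).inter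
    (isOpen_ne_fun continuous_snd continuous_const)

lemma alphaM_eq (m : ℕ) {p : P3} (hp : p ∈ Hstar) :
    alphaM m p = -(((m : ℝ) + 1) / 2) * (cothTh m p * (rad p)⁻¹) := by
  have hr := znorm_pos hp
  have hT := rad_pos hp
  have hS := sinh_Th_pos m hp
  have ht : 0 < p.1 := hp.1
  rw [alphaM, cothTh, sinh_Th, cosh_Th hp]
  field_simp

lemma fM_eq (m : ℕ) {p : P3} (hp : p ∈ Hstar) :
    fM m p = 1 - p.1 * (cothTh m p * (rad p)⁻¹) := by
  have hr := znorm_pos hp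
  have hT := rad_pos hp
  have hS := sinh_Th_pos m hp
  rw [fM, cothTh, sinh_Th, cosh_Th hp]
  field_simp

lemma hasFDerivAt_znorm {p : P3} (hp : p ∈ Hstar) :
    HasFDerivAt znorm ((znorm p)⁻¹ • (p.2.1 • dz1 + p.2.2 • dz2)) p := by
  have hr := znorm_pos hp
  have h := (((hasFDerivAt_z1 p).pow 2).fun_add ((hasFDerivAt_z2 p).pow 2)).sqrt
    (by rw [← znorm_sq]; positivity)
  refine h.congr_fderiv ?_
  ext <;> simp [znorm] <;> ring

lemma hasFDerivAt_rad {p : P3} (hp : p ∈ Hstar) :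
    HasFDerivAt rad ((rad p)⁻¹ • (p.1 • dt + (p.2.1 • dz1 + p.2.2 • dz2))) p := by
  have hr := znorm_pos hp
  have h := (((hasFDerivAt_t p).pow 2).fun_add ((hasFDerivAt_znorm hp).pow 2)).sqrt
    (by positivity)
  refine h.congr_fderiv ?_
  ext <;> simp [rad] <;> field_simp

lemma hasFDerivAt_Th {p : P3} (hp : p ∈ Hstar) :
    HasFDerivAt Th ((rad p)⁻¹ •
      (dt - (p.1 / znorm p ^ 2) • (p.2.1 • dz1 + p.2.2 • dz2))) p := by
  have hr := znorm_pos hp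
  have hT := rad_pos hp
  have h := ((hasFDerivAt_t p).fun_mul
    ((hasDerivAt_inv hr.ne').comp_hasFDerivAt p (hasFDerivAt_znorm hp))).arsinh
  have hsq : √(1 + (p.1 * (znorm p)⁻¹) ^ 2) = rad p / znorm p := by
    rw [← div_eq_mul_inv, ← Real.cosh_arsinh]
    exact cosh_Th hp
  refine h.congr_fderiv ?_
  simp only [Function.comp_apply, hsq]
  ext <;> simp <;> field_simp

lemma hasFDerivAt_sinh_Th (m : ℕ) {p : P3} (hp : p ∈ Hstar) :
    HasFDerivAt (fun q => Real.sinh (((m : ℝ) + 1) * Th q))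
      ((Real.cosh (((m : ℝ) + 1) * Th p) * ((m : ℝ) + 1) * (rad p)⁻¹) •
        (dt - (p.1 / znorm p ^ 2) • (p.2.1 • dz1 + p.2.2 • dz2))) p := by
  refine ((hasFDerivAt_Th hp).const_mul ((m : ℝ) + 1)).sinh.congr_fderiv ?_
  simp only [smul_smul, mul_assoc]

lemma hasFDerivAt_cothTh (m : ℕ) {p : P3} (hp : p ∈ Hstar) :
    HasFDerivAt (cothTh m)
      ((-((m : ℝ) + 1) / (rad p * Real.sinh (((m : ℝ) + 1) * Th p) ^ 2)) •
        (dt - (p.1 / znorm p ^ 2) • (p.2.1 • dz1 + p.2.2 • dz2))) p := by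
  have hS := sinh_Th_pos m hp
  have hT := rad_pos hp
  have h := ((hasFDerivAt_Th hp).const_mul ((m : ℝ) + 1)).cosh.fun_mul
    ((hasDerivAt_inv hS.ne').comp_hasFDerivAt p (hasFDerivAt_sinh_Th m hp))
  refine h.congr_fderiv ?_
  simp only [Function.comp_apply, smul_smul, ← add_smul]
  congr 1
  field_simp
  rw [Real.cosh_sq]
  ring

/-- The differential of `coth ((m+1) Θ) / (t² + |z|²)^{1/2}`. -/
def dCothDivRad (m : ℕ) (p : P3) : P3 →L[ℝ] ℝ :=
  (-((m : ℝ) + 1) / (rad p ^ 2 * Real.sinh (((m : ℝ) + 1) * Th p) ^ 2)) •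
      (dt - (p.1 / znorm p ^ 2) • (p.2.1 • dz1 + p.2.2 • dz2))
    + (-cothTh m p / rad p ^ 3) • (p.1 • dt + (p.2.1 • dz1 + p.2.2 • dz2))

lemma hasFDerivAt_cothTh_mul_inv_rad (m : ℕ) {p : P3} (hp : p ∈ Hstar) :
    HasFDerivAt (fun q => cothTh m q * (rad q)⁻¹) (dCothDivRad m p) p := by
  have hS := sinh_Th_pos m hp
  have hT := rad_pos hp
  have h := (hasFDerivAt_cothTh m hp).fun_mul
    ((hasDerivAt_inv hT.ne').comp_hasFDerivAt p (hasFDerivAt_rad hp))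
  refine h.congr_fderiv ?_
  rw [dCothDivRad, add_comm]
  simp only [Function.comp_apply, smul_smul]
  congr 2 <;> field_simp

lemma hasFDerivAt_alphaM (m : ℕ) {p : P3} (hp : p ∈ Hstar) :
    HasFDerivAt (alphaM m) ((-(((m : ℝ) + 1) / 2)) • dCothDivRad m p) p :=
  ((hasFDerivAt_cothTh_mul_inv_rad m hp).const_mul _).congr_of_eventuallyEq
    (eventually_of_mem (Hstar_mem_nhds hp) fun _ hq => alphaM_eq m hq)

lemma hasFDerivAt_fM (m : ℕ) {p : P3} (hp : p ∈ Hstar) :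
    HasFDerivAt (fM m)
      (-(p.1 • dCothDivRad m p + (cothTh m p * (rad p)⁻¹) • dt)) p :=
  (((hasFDerivAt_t p).fun_mul (hasFDerivAt_cothTh_mul_inv_rad m hp)).const_sub 1
    ).congr_of_eventuallyEq (eventually_of_mem (Hstar_mem_nhds hp) fun _ hq => fM_eq m hq)

lemma hasFDerivAt_inv_znorm_sq {p : P3} (hp : p ∈ Hstar) :
    HasFDerivAt (fun q => (znorm q ^ 2)⁻¹)
      ((-2 / znorm p ^ 4) • (p.2.1 • dz1 + p.2.2 • dz2)) p := by
  have hr := znorm_pos hp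
  have h := (hasDerivAt_inv (pow_pos hr 2).ne').comp_hasFDerivAt p
    ((hasFDerivAt_znorm hp).pow 2)
  refine h.congr_fderiv ?_
  simp only [smul_smul]
  congr 1
  simp
  field_simp

/-- The real prefactor of `zᵐ` in the model Higgs field. -/
def phiFactor (m : ℕ) (p : P3) : ℝ :=
  -(((m : ℝ) + 1) / 2) * (znorm p ^ (m + 1) * Real.sinh (((m : ℝ) + 1) * Th p))⁻¹

lemma hasFDerivAt_phiFactor (m : ℕ) {p : P3} (hp : p ∈ Hstar) :
    HasFDerivAt (phiFactor m)
      ((-(((m : ℝ) + 1) * phiFactor m p)) •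
        ((cothTh m p * (rad p)⁻¹) • dt +
          (fM m p / znorm p ^ 2) • (p.2.1 • dz1 + p.2.2 • dz2))) p := by
  have hr := znorm_pos hp
  have hS := sinh_Th_pos m hp
  have hT := rad_pos hp
  have h := ((hasDerivAt_inv (mul_pos (pow_pos hr (m + 1)) hS).ne').comp_hasFDerivAt p
    (((hasFDerivAt_znorm hp).pow (m + 1)).fun_mul (hasFDerivAt_sinh_Th m hp))).const_mul
      (-(((m : ℝ) + 1) / 2))
  refine h.congr_fderiv ?_
  rw [fM_eq m hp]
  ext <;> simp [phiFactor, cothTh] <;> field_simp <;> ring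

lemma hasFDerivAt_zc (p : P3) :
    HasFDerivAt zc (Complex.ofRealCLM.comp dz1 + Complex.I • Complex.ofRealCLM.comp dz2) p :=
  (Complex.ofRealCLM.comp dz1 + Complex.I • Complex.ofRealCLM.comp dz2).hasFDerivAt

lemma normSq_zc (p : P3) : Complex.normSq (zc p) = znorm p ^ 2 := by
  rw [znorm_sq, zc, mul_comm, Complex.normSq_add_mul_I]

lemma modelPhi_eq (m : ℕ) {p : P3} (hp : p ∈ Hstar) :
    modelPhi m p = ((phiFactor m p : ℂ) * zc p ^ m) • (s1 - Complex.I • s2) := by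
  have hr : (znorm p : ℂ) ≠ 0 := mod_cast (znorm_pos hp).ne'
  have hS := (sinh_Th_pos m hp).ne'
  have hS' : ((Real.sinh (((m : ℝ) + 1) * Th p) : ℝ) : ℂ) ≠ 0 := mod_cast hS
  have ht : (p.1 : ℂ) ≠ 0 := mod_cast (ne_of_gt hp.1)
  rw [modelPhi, phiFactor, sinh_Th]
  congr 1
  generalize Real.sinh (((m : ℝ) + 1) * Th p) = S at *
  push_cast
  rw [div_pow, pow_succ]
  field_simp

lemma pd_smul_const {g : P3 → ℂ} {g' : P3 →L[ℝ] ℂ} {p : P3} (h : HasFDerivAt g g' p)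
    (v : P3) (M : M2) : pd v (fun q => g q • M) p = g' v • M :=
  DFunLike.congr_fun (h.smul_const M).fderiv v

lemma pd_ofReal_smul_const {g : P3 → ℝ} {g' : P3 →L[ℝ] ℝ} {p : P3} (h : HasFDerivAt g g' p)
    (v : P3) (M : M2) : pd v (fun q => (g q : ℂ) • M) p = (g' v : ℂ) • M :=
  pd_smul_const (Complex.ofRealCLM.hasFDerivAt.comp p h) v M

lemma mcomm_zero_left (X : M2) : mcomm 0 X = 0 := by simp [mcomm]

lemma mcomm_s3_s3 (x y : ℂ) : mcomm (x • s3) (y • s3) = 0 := by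
  simp [mcomm, smul_smul, mul_comm]

lemma mcomm_s3_sigma12 (x y : ℂ) :
    mcomm (x • s3) (y • (s1 - Complex.I • s2))
      = (-2 * Complex.I * x * y) • (s1 - Complex.I • s2) := by
  ext i j
  fin_cases i <;> fin_cases j <;> simp [mcomm, s1, s2, s3]
  ring

lemma mcomm_sigma12_mstar (w : ℂ) :
    mcomm (w • (s1 - Complex.I • s2)) (mstar (w • (s1 - Complex.I • s2)))
      = (-4 * Complex.I * Complex.normSq w) • s3 := by
  ext i j
  fin_cases i <;> fin_cases j <;>
    simp [mcomm, mstar, s1, s2, s3, Matrix.mul_apply, Fin.sum_univ_two, Matrix.conjTranspose_apply,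
      Complex.normSq_eq_conj_mul_self, -Matrix.cons_mul] <;>
    ring

/-- Reduction of the Kapustin-Witten equations to scalar equations for data whose connection and
`a₃` are multiples of `σ₃` and whose Higgs field is a multiple of `σ₁ - iσ₂`. -/
lemma kw_of_scalar_equations {A1 A2 a3 phi : P3 → M2} {b1 b2 al : P3 → ℝ} {w : P3 → ℂ}
    {b1' b2' al' : P3 →L[ℝ] ℝ} {w' : P3 →L[ℝ] ℂ} {p : P3} (m : ℕ)
    (hA1 : A1 = fun q => (b1 q : ℂ) • s3) (hA2 : A2 = fun q => (b2 q : ℂ) • s3)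
    (ha3 : a3 = fun q => (al q : ℂ) • s3)
    (hphi : phi =ᶠ[𝓝 p] fun q => w q • (s1 - Complex.I • s2))
    (hb1 : HasFDerivAt b1 b1' p) (hb2 : HasFDerivAt b2 b2' p) (hal : HasFDerivAt al al' p)
    (hw : HasFDerivAt w w' p)
    (h1 : b1' et = al' ez2) (h2 : b2' et = -al' ez1)
    (h3 : w' ez1 + Complex.I * w' ez2 = 2 * Complex.I * (b1 p + Complex.I * b2 p) * w p)
    (h4 : w' et = 2 * al p * w p)
    (h5 : al' et = b2' ez1 - b1' ez2 + 2 * Complex.normSq (w p)) :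
    KW123At (modelAt m) A1 A2 a3 phi p ∧ KW4At (modelAt m) A1 A2 a3 phi p := by
  have hpd (v : P3) : pd v phi p = w' v • (s1 - Complex.I • s2) := by
    rw [pd, hphi.fderiv_eq]
    exact pd_smul_const hw v _
  have hAt (v : P3) : pd v (modelAt m) p = 0 :=
    DFunLike.congr_fun (hasFDerivAt_const (0 : M2) p).fderiv v
  subst hA1 hA2 ha3
  simp only [KW123At, KW4At, EA1Of, EA2Of, B3Of, cd, hpd, hAt, hphi.eq_of_nhds,
    pd_ofReal_smul_const hb1, pd_ofReal_smul_const hb2, pd_ofReal_smul_const hal,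
    mcomm_s3_s3, mcomm_s3_sigma12, mcomm_sigma12_mstar, modelAt, mcomm_zero_left,
    sub_zero, add_zero, smul_smul, ← add_smul, ← sub_smul]
  refine ⟨⟨by rw [h1], by rw [h2]; simp, ?_, ?_⟩, ?_⟩
  · convert zero_smul ℂ (s1 - Complex.I • s2)
    linear_combination h3
  · congr 1
    linear_combination h4 + 2 * al p * w p * Complex.I_sq
  · congr 1
    rw [h5]
    push_cast
    linear_combination 2 * Complex.normSq (w p) * Complex.I_sq

lemma hasFDerivAt_modelA1_coeff (m : ℕ) {p : P3} (hp : p ∈ Hstar) :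
    HasFDerivAt (fun q => -(((m : ℝ) + 1) / 2) * fM m q * (q.2.2 / znorm q ^ 2))
      ((-(((m : ℝ) + 1) / 2) * fM m p) •
          (p.2.2 • (-2 / znorm p ^ 4) • (p.2.1 • dz1 + p.2.2 • dz2) + (znorm p ^ 2)⁻¹ • dz2)
        + (p.2.2 / znorm p ^ 2) • (-(((m : ℝ) + 1) / 2)) •
          (-(p.1 • dCothDivRad m p + (cothTh m p * (rad p)⁻¹) • dt))) p :=
  ((hasFDerivAt_fM m hp).const_mul _).fun_mul
    ((hasFDerivAt_z2 p).fun_mul (hasFDerivAt_inv_znorm_sq hp))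

lemma hasFDerivAt_modelA2_coeff (m : ℕ) {p : P3} (hp : p ∈ Hstar) :
    HasFDerivAt (fun q => ((m : ℝ) + 1) / 2 * fM m q * (q.2.1 / znorm q ^ 2))
      ((((m : ℝ) + 1) / 2 * fM m p) •
          (p.2.1 • (-2 / znorm p ^ 4) • (p.2.1 • dz1 + p.2.2 • dz2) + (znorm p ^ 2)⁻¹ • dz1)
        + (p.2.1 / znorm p ^ 2) • (((m : ℝ) + 1) / 2) •
          (-(p.1 • dCothDivRad m p + (cothTh m p * (rad p)⁻¹) • dt))) p :=
  ((hasFDerivAt_fM m hp).const_mul _).fun_mul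
    ((hasFDerivAt_z1 p).fun_mul (hasFDerivAt_inv_znorm_sq hp))

lemma hasFDerivAt_modelPhi_coeff (m : ℕ) {p : P3} (hp : p ∈ Hstar) :
    HasFDerivAt (fun q => (phiFactor m q : ℂ) * zc q ^ m)
      ((phiFactor m p : ℂ) • (m • zc p ^ (m - 1)) •
          (Complex.ofRealCLM.comp dz1 + Complex.I • Complex.ofRealCLM.comp dz2)
        + zc p ^ m • Complex.ofRealCLM.comp ((-(((m : ℝ) + 1) * phiFactor m p)) •
          ((cothTh m p * (rad p)⁻¹) • dt +
            (fM m p / znorm p ^ 2) • (p.2.1 • dz1 + p.2.2 • dz2)))) p :=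
  (Complex.ofRealCLM.hasFDerivAt.comp p (hasFDerivAt_phiFactor m hp)).fun_mul
    ((hasFDerivAt_zc p).pow m)

lemma normSq_modelPhi_coeff (m : ℕ) {p : P3} (hp : p ∈ Hstar) :
    Complex.normSq ((phiFactor m p : ℂ) * zc p ^ m)
      = ((m : ℝ) + 1) ^ 2 /
        (4 * znorm p ^ 2 * Real.sinh (((m : ℝ) + 1) * Th p) ^ 2) := by
  have hr := znorm_pos hp
  have hS := sinh_Th_pos m hp
  rw [map_mul, map_pow, normSq_zc, Complex.normSq_ofReal, phiFactor]
  field_simp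
  ring

end KWModel

/-- Witten's model solutions (1.5) of the paper satisfy all four ℝ-invariant
Kapustin-Witten equations on `{(t,z) ∈ H : z ≠ 0}`. -/
theorem statement18 (m : ℕ) :
    ∀ p ∈ Hstar,
      KW123At (modelAt m) (modelA1 m) (modelA2 m) (modela3 m) (modelPhi m) p ∧
      KW4At (modelAt m) (modelA1 m) (modelA2 m) (modela3 m) (modelPhi m) p := by
  intro p hp
  have hr := KWModel.znorm_pos hp
  have hT := KWModel.rad_pos hp
  have hS := KWModel.sinh_Th_pos m hp
  have hTsq := KWModel.rad_sq p
  have hrsq := KWModel.znorm_sq p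
  refine KWModel.kw_of_scalar_equations m rfl rfl rfl
    (eventually_of_mem (KWModel.Hstar_mem_nhds hp) fun _ hq => KWModel.modelPhi_eq m hq)
    (KWModel.hasFDerivAt_modelA1_coeff m hp) (KWModel.hasFDerivAt_modelA2_coeff m hp)
    (KWModel.hasFDerivAt_alphaM m hp) (KWModel.hasFDerivAt_modelPhi_coeff m hp) ?_ ?_ ?_ ?_ ?_
  · simp [et, ez2, KWModel.dCothDivRad]
    field_simp
    rw [hTsq]
    ring
  · simp [et, ez1, KWModel.dCothDivRad]
    field_simp
    rw [hTsq]
    ring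
  · have hr' : (znorm p : ℂ) ≠ 0 := mod_cast hr.ne'
    simp [ez1, ez2]
    field_simp
    linear_combination (KWModel.phiFactor m p * m * zc p ^ (m - 1) * znorm p ^ 2
      - KWModel.phiFactor m p * zc p ^ m * (m + 1) * fM m p * p.2.1) * Complex.I_sq
  · have hT' : (KWModel.rad p : ℂ) ≠ 0 := mod_cast hT.ne'
    simp [et, KWModel.alphaM_eq m hp]
    field_simp
  · rw [KWModel.normSq_modelPhi_coeff m hp]
    simp [et, ez1, ez2, KWModel.dCothDivRad, KWModel.fM_eq m hp]
    field_simp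
    linear_combination (-4 * ((m : ℝ) + 1) * KWModel.rad p * znorm p ^ 2) * hTsq
      + 4 * (-2 * KWModel.rad p ^ 2 * Real.sinh (((m : ℝ) + 1) * Th p) ^ 2
          * (KWModel.rad p - KWModel.cothTh m p * p.1)
        + p.1 * (Real.sinh (((m : ℝ) + 1) * Th p) ^ 2 * KWModel.cothTh m p * znorm p ^ 2
          - ((m : ℝ) + 1) * KWModel.rad p * p.1)) * hrsq

end
end
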